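/- Let p be a prime and m ≥ 1 an integer. The p-adic density, within the set of all monic binary forms of degree 2m over ℤ_p (identified with their coefficient vectors in ℤ_p^{2m}), of the subset of forms H such that R_H is maximal and the reduction of H modulo p is the square of a binary form over F_p, equals p^{-m}·(1 - p^{-1}). -/

import Mathlib

open Polynomial Matrix MeasureTheory
open scoped Classical
noncomputable section
namespace BHS



/-! ### Binary forms and the rings they cut out, over a general base -/

variable (R K : Type) [CommRing R] [Field K] [Algebra R K]

/-- The one-variable polynomial `F(x,1)` of the binary form of degree `n` with
coefficient vector `c` (so `F(x,z) = ∑ c i · x^(n-i) · z^i`), over `K`. -/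
def binPoly (n : ℕ) (c : ℕ → R) : Polynomial K :=
  ∑ i ∈ Finset.range (n + 1), Polynomial.C (algebraMap R K (c i)) * Polynomial.X ^ (n - i)

/-- The étale algebra `K_F = K[x]/(F(x,1))`. -/
abbrev KF (n : ℕ) (c : ℕ → R) : Type := AdjoinRoot (binPoly R K n c)

/-- θ, the image of x in K_F. -/
def θF (n : ℕ) (c : ℕ → R) : KF R K n c := AdjoinRoot.root _

/-- `ζ_i = ∑_{j<i} f_j θ^{i-j}`. -/
def ζF (n : ℕ) (c : ℕ → R) (i : ℕ) : KF R K n c :=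
  ∑ j ∈ Finset.range i, algebraMap R (KF R K n c) (c j) * θF R K n c ^ (i - j)

/-- The ring `R_F`, as the free `R`-submodule of `K_F` with basis `1, ζ_1, …, ζ_{n-1}`
(a subring by Nakagawa's theorem). -/
def RFmod (n : ℕ) (c : ℕ → R) : Submodule R (KF R K n c) :=
  Submodule.span R ({1} ∪ {x | ∃ i, 1 ≤ i ∧ i ≤ n - 1 ∧ x = ζF R K n c i})

/-- The fractional ideal `I_F^k`, as the free `R`-submodule of `K_F` with basis
`1, θ, …, θ^k, ζ_{k+1}, …, ζ_{n-1}`. -/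
def IFmod (n : ℕ) (c : ℕ → R) (k : ℕ) : Submodule R (KF R K n c) :=
  Submodule.span R ({x | ∃ j ≤ k, x = θF R K n c ^ j} ∪
    {x | ∃ i, k + 1 ≤ i ∧ i ≤ n - 1 ∧ x = ζF R K n c i})

/-- `R_F` is the maximal order (the integral closure of `R`) in `K_F`. -/
def IsMaxOrder (n : ℕ) (c : ℕ → R) : Prop :=
  RFmod R K n c = Subalgebra.toSubmodule (integralClosure R (KF R K n c))

/-- `M` is stable under multiplication by `R_F`, i.e. `M` is an `R_F`-submodule of `K_F`. -/
def IsStable (n : ℕ) (c : ℕ → R) (M : Submodule R (KF R K n c)) : Prop :=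
  ∀ ρ ∈ RFmod R K n c, ∀ x ∈ M, ρ * x ∈ M

/-- `M` is an invertible fractional ideal of `R_F`. -/
def IsInvIdeal (n : ℕ) (c : ℕ → R) (M : Submodule R (KF R K n c)) : Prop :=
  IsStable R K n c M ∧
    ∃ N : Submodule R (KF R K n c), IsStable R K n c N ∧ M * N = RFmod R K n c

/-- The principal fractional ideal of `R_F` generated by `α`. -/
def principal (n : ℕ) (c : ℕ → R) (α : KF R K n c) : Submodule R (KF R K n c) :=
  Submodule.span R {α} * RFmod R K n c

/-- `ρ` is a unit of the order `R_F`. -/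
def IsUnitRF (n : ℕ) (c : ℕ → R) (ρ : KF R K n c) : Prop :=
  ρ ∈ RFmod R K n c ∧ ∃ σ ∈ RFmod R K n c, ρ * σ = 1

/-- `#R_F^×[2]`, the number of 2-torsion units of `R_F`. -/
def twoTorsUnitsCount (n : ℕ) (c : ℕ → R) : ℕ :=
  Nat.card {ρ : KF R K n c // ρ ∈ RFmod R K n c ∧ ρ ^ 2 = 1}

/-- The number of 2-torsion elements of the ideal class group `Cl(R_F)`: the number of
invertible fractional ideals of `R_F` whose square is principal, counted modulo
principal fractional ideals. -/
def clTwoCount (n : ℕ) (c : ℕ → R) : ℕ :=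
  Nat.card (Quot (fun (I J : {M : Submodule R (KF R K n c) //
      IsInvIdeal R K n c M ∧
        ∃ α : KF R K n c, IsUnit α ∧ M * M = principal R K n c α}) =>
    ∃ α : KF R K n c, IsUnit α ∧
      (I : Submodule R (KF R K n c)) =
        Submodule.span R {α} * (J : Submodule R (KF R K n c))))

/-- `α ∈ K_F` is totally positive: positive under every real embedding. -/
def TotPos (n : ℕ) (c : ℕ → R) (α : KF R K n c) : Prop :=
  ∀ φ : KF R K n c →+* ℝ, 0 < φ α

/-- The number of 2-torsion elements of the narrow class group `Cl⁺(R_F)`. -/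
def clTwoCountPlus (n : ℕ) (c : ℕ → R) : ℕ :=
  Nat.card (Quot (fun (I J : {M : Submodule R (KF R K n c) //
      IsInvIdeal R K n c M ∧
        ∃ α : KF R K n c, IsUnit α ∧ TotPos R K n c α ∧ M * M = principal R K n c α}) =>
    ∃ α : KF R K n c, IsUnit α ∧ TotPos R K n c α ∧
      (I : Submodule R (KF R K n c)) =
        Submodule.span R {α} * (J : Submodule R (KF R K n c))))

/-- The order of the ideal class group of `R_F`. -/
def clCount (n : ℕ) (c : ℕ → R) : ℕ :=
  Nat.card (Quot (fun (I J : {M : Submodule R (KF R K n c) // IsInvIdeal R K n c M}) =>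
    ∃ α : KF R K n c, IsUnit α ∧
      (I : Submodule R (KF R K n c)) =
        Submodule.span R {α} * (J : Submodule R (KF R K n c))))

/-- The order of the narrow class group of `R_F`. -/
def clCountPlus (n : ℕ) (c : ℕ → R) : ℕ :=
  Nat.card (Quot (fun (I J : {M : Submodule R (KF R K n c) // IsInvIdeal R K n c M}) =>
    ∃ α : KF R K n c, IsUnit α ∧ TotPos R K n c α ∧
      (I : Submodule R (KF R K n c)) =
        Submodule.span R {α} * (J : Submodule R (KF R K n c))))




/-! ### p-adic machinery -/

variable (p : ℕ) [Fact p.Prime]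

instance : MeasurableSpace ℤ_[p] := borel _
instance : BorelSpace ℤ_[p] := ⟨rfl⟩

/-- Haar probability measure on `ℤ_p^n`. -/
def haarP (n : ℕ) : Measure (Fin n → ℤ_[p]) :=
  Measure.addHaarMeasure ⟨⟨Set.univ, isCompact_univ⟩, by rw [interior_univ]; exact Set.univ_nonempty⟩

/-- The `p`-adic density of `A` within `B` (subsets of the coefficient space `ℤ_p^n`). -/
def densIn (n : ℕ) (A B : Set (Fin n → ℤ_[p])) : ℝ :=
  (haarP p n A).toReal / (haarP p n B).toReal

/-- The coefficient vector of the degree-`n` binary form with leading coefficient `f0` and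
remaining coefficients `v`. -/
def consF0 (n : ℕ) (f0 : ℤ_[p]) (v : Fin n → ℤ_[p]) : ℕ → ℤ_[p] :=
  fun j => if j = 0 then f0 else if h : j - 1 < n then v ⟨j - 1, h⟩ else 0

/-- The reduction of the binary form with coefficients `c` modulo `p`, as a polynomial in
two variables `x = X 0`, `z = X 1` over `F_p`. -/
def redForm (n : ℕ) (c : ℕ → ℤ_[p]) : MvPolynomial (Fin 2) (ZMod p) :=
  ∑ i ∈ Finset.range (n + 1),
    MvPolynomial.C (PadicInt.toZMod (c i)) * MvPolynomial.X 0 ^ (n - i) * MvPolynomial.X 1 ^ i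

/-- `F` is squareful over `ℤ_p`: `F ≡ κ·z^{e}·H² (mod p)` with `e > 0`, `κ ∈ F_p^×` and
`H` a monic binary form over `F_p` (hence not divisible by `z`). -/
def SquarefulP (n : ℕ) (c : ℕ → ℤ_[p]) : Prop :=
  ∃ (κ : (ZMod p)ˣ) (e d : ℕ) (H : MvPolynomial (Fin 2) (ZMod p)),
    0 < e ∧ H.IsHomogeneous d ∧ MvPolynomial.coeff (Finsupp.single 0 d) H = 1 ∧
    redForm p n c = MvPolynomial.C (κ : ZMod p) * MvPolynomial.X 1 ^ e * H ^ 2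

/-- `F` is evenly ramified over `ℤ_p`: `F ≡ κ·H² (mod p)` with `κ ∈ F_p^×`. -/
def EvenRamP (n : ℕ) (c : ℕ → ℤ_[p]) : Prop :=
  ∃ (κ : (ZMod p)ˣ) (H : MvPolynomial (Fin 2) (ZMod p)),
    redForm p n c = MvPolynomial.C (κ : ZMod p) * H ^ 2

/-- `F` is primitive over `ℤ_p`: its coefficients generate the unit ideal. -/
def PrimP (n : ℕ) (c : ℕ → ℤ_[p]) : Prop := ∃ i ≤ n, IsUnit (c i)

/-- `F` is separable (of degree `n`) over `ℚ_p`. -/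
def SepDegP (n : ℕ) (c : ℕ → ℤ_[p]) : Prop :=
  (binPoly ℤ_[p] ℚ_[p] n c).Separable ∧ (binPoly ℤ_[p] ℚ_[p] n c).natDegree = n

/-- The determinant of the Sylvester matrix of `F(x,1)` (of formal degree n) and
`F'(x,1)` (of formal degree n-1); it equals `±f_0` times the discriminant of the form. -/
def sylvDet (S : Type) [CommRing S] (n : ℕ) (c : ℕ → S) : S :=
  Matrix.det (Matrix.of (fun (i j : Fin (n + (n - 1))) =>
    if (i : ℕ) < n - 1 then
      (if (i : ℕ) ≤ (j : ℕ) ∧ (j : ℕ) ≤ (i : ℕ) + n then c ((j : ℕ) - (i : ℕ)) else 0)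
    else
      (if (i : ℕ) - (n - 1) ≤ (j : ℕ) ∧ (j : ℕ) ≤ ((i : ℕ) - (n - 1)) + (n - 1) then
        ((n - ((j : ℕ) - ((i : ℕ) - (n - 1))) : ℕ) : S) * c ((j : ℕ) - ((i : ℕ) - (n - 1)))
      else 0)))

/-- The discriminant of the form with coefficients `c` is not divisible by `p²`. -/
def DiscOK (n : ℕ) (c : ℕ → ℤ_[p]) : Prop :=
  ¬ ((p : ℤ_[p]) ^ 2 * c 0 ∣ sylvDet ℤ_[p] n c)

/-- The reduction modulo `p` of the degree-`n` binary form with coefficients `c` is a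
separable binary form over `F_p`. -/
def SepFormModP (n : ℕ) (c : ℕ → ℤ_[p]) : Prop :=
  (∑ i ∈ Finset.range (n + 1),
      Polynomial.C (PadicInt.toZMod (c i)) * (Polynomial.X : Polynomial (ZMod p)) ^ (n - i)).Separable ∧
  n - 1 ≤ (∑ i ∈ Finset.range (n + 1),
      Polynomial.C (PadicInt.toZMod (c i)) * (Polynomial.X : Polynomial (ZMod p)) ^ (n - i)).natDegree

/-
Let `f ≡ G² mod p` be monic and write `f = g² + p h` with `g` lifting `G`. As in Dedekind's
criterion, `ℤ_p[θ]` is maximal if and only if `G` and `h mod p` are coprime: if they are, `h(θ)` is a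
unit, so `p` is a unit times `g(θ)²` and `ℤ_p[θ]` modulo a lift of the radical of `G` is reduced; a
common factor `d`, with `G = d e`, instead makes `e(θ) g(θ) / p` integral. The event is therefore a
union of residue classes mod `p²`, in bijection with the coprime pairs `(G, h)` with `G` monic of
degree `m` and `deg h < 2m`. Sorting all pairs by their monic gcd shows that there are
`p^{3m} - p^{3m-1}` of these, among `p^{4m}` residue classes.
-/

section IntegralClosure

variable {A B : Type*} [CommRing A] [CommRing B] [Algebra A B]

lemma mem_range_algebraMap_of_isRadical (hinj : Function.Injective (algebraMap A B)) {s : A}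
    (hs : IsRadical s) (hu : IsUnit (algebraMap A B s)) {x : B} (hx : IsIntegral A x) (n : ℕ)
    (h : algebraMap A B s ^ n * x ∈ (algebraMap A B).range) : x ∈ (algebraMap A B).range := by
  induction n with
  | zero => simpa using h
  | succ n ih =>
    obtain ⟨c, hc⟩ := h
    have hy : IsIntegral A (algebraMap A B s ^ n * x) := (isIntegral_algebraMap.pow n).mul hx
    obtain ⟨P, hP, hPy⟩ := hy
    obtain ⟨d, rfl⟩ := hs _ _ <| dvd_pow_natDegree_of_eval₂_eq_zero hinj hP s c _ hPy
      (by rw [hc, pow_succ', mul_assoc])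
    exact ih ⟨d, hu.mul_left_cancel (by rw [← map_mul, hc, pow_succ', mul_assoc])⟩

lemma isIntegrallyClosedIn_of_isRadical {s ϖ : A} [IsLocalization.Away ϖ B]
    (hϖ : ϖ ∈ nonZeroDivisors A) (hs : IsRadical s) (hsϖ : s ∣ ϖ) {N : ℕ} (hϖs : ϖ ∣ s ^ N) :
    IsIntegrallyClosedIn A B := by
  have hinj : Function.Injective (algebraMap A B) :=
    IsLocalization.injective B (Submonoid.powers_le.2 hϖ)
  refine isIntegrallyClosedIn_iff.2 ⟨hinj, fun {x} hx => ?_⟩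
  obtain ⟨n, a, hxa⟩ := IsLocalization.Away.surj ϖ x
  obtain ⟨t, ht⟩ := hϖs
  refine mem_range_algebraMap_of_isRadical hinj hs (IsLocalization.Away.isUnit_of_dvd ϖ hsϖ) hx
    (N * n) ⟨t ^ n * a, ?_⟩
  rw [map_mul, ← hxa, pow_mul, ← map_pow (algebraMap A B) s, ht, map_mul, map_pow]
  ring

lemma dvd_of_sq_add_eq_zero (B : Type*) [CommRing B] [Algebra A B] {ϖ b c y : A}
    [IsLocalization.Away ϖ B] [IsIntegrallyClosedIn A B]
    (h : y ^ 2 + b * ϖ * y + c * ϖ ^ 2 = 0) : ϖ ∣ y := by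
  obtain ⟨hinj, hclosed⟩ := isIntegrallyClosedIn_iff.1 ‹IsIntegrallyClosedIn A B›
  obtain ⟨r, hr⟩ := (IsLocalization.Away.algebraMap_isUnit (S := B) ϖ).exists_right_inv
  have hroot : (algebraMap A B y * r) ^ 2 + algebraMap A B b * (algebraMap A B y * r)
      + algebraMap A B c = 0 := by
    have h' := congrArg (algebraMap A B) h
    simp only [map_add, map_mul, map_pow, map_zero] at h'
    linear_combination r ^ 2 * h' - algebraMap A B b * algebraMap A B y * r * hr
      - algebraMap A B c * (algebraMap A B ϖ * r + 1) * hr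
  have hint : IsIntegral A (algebraMap A B y * r) :=
    ⟨X ^ 2 + C b * X + C c, by monicity!, by simpa using hroot⟩
  obtain ⟨a, ha⟩ := hclosed hint
  refine ⟨a, hinj ?_⟩
  rw [map_mul, ha]
  linear_combination -algebraMap A B y * hr

lemma algebraMap_mem_jacobson_bot [Algebra.IsIntegral A B] {x : A}
    (hx : x ∈ (⊥ : Ideal A).jacobson) : algebraMap A B x ∈ (⊥ : Ideal B).jacobson := by
  refine Submodule.mem_sInf.2 fun (M : Ideal B) hM => ?_
  have hMmax : M.IsMaximal := hM.2
  exact Submodule.mem_sInf.1 hx _ ⟨bot_le, Ideal.isMaximal_comap_of_isIntegral_of_isMaximal M⟩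

lemma dvd_of_mem_span_pair_of_sq_dvd {ϖ γ s : A} (hϖ : ϖ ∈ (⊥ : Ideal A).jacobson)
    (hγϖ : γ ^ 2 ∣ ϖ) (hγ : γ ∈ Ideal.span {s, ϖ}) : s ∣ γ := by
  obtain ⟨c, rfl⟩ := hγϖ
  obtain ⟨a, b, hab⟩ := Ideal.mem_span_pair.1 hγ
  have hunit : IsUnit ((1 - b * c * γ) * (1 + b * c * γ)) := by
    convert Ideal.mem_jacobson_bot.1 hϖ (-(b ^ 2 * c)) using 1
    ring
  rw [← (isUnit_of_mul_isUnit_left hunit).dvd_mul_right]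
  exact ⟨a, by linear_combination -hab⟩

end IntegralClosure

section Dedekind

variable {A k : Type*} [CommRing A] [Field k] {φ : A →+* k} {ϖ : A} {f g h s P : A[X]}

lemma map_eq_map_iff_C_dvd_sub {A S : Type*} [CommRing A] [CommRing S] {φ : A →+* S} {ϖ : A}
    (hker : RingHom.ker φ = Ideal.span {ϖ}) {P Q : A[X]} :
    P.map φ = Q.map φ ↔ C ϖ ∣ P - Q := by
  rw [← sub_eq_zero, ← Polynomial.map_sub, ← coe_mapRingHom, ← RingHom.mem_ker,
    Polynomial.ker_mapRingHom, hker, Ideal.map_span, Set.image_singleton,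
    Ideal.mem_span_singleton]

lemma map_dvd_map_iff_mk_mem_span (hφ : Function.Surjective φ)
    (hker : RingHom.ker φ = Ideal.span {ϖ}) (hs : s.map φ ∣ f.map φ) :
    s.map φ ∣ P.map φ ↔ AdjoinRoot.mk f P ∈ Ideal.span {AdjoinRoot.mk f s, AdjoinRoot.of f ϖ} := by
  rw [Ideal.mem_span_pair]
  constructor
  · rintro ⟨T, hT⟩
    obtain ⟨t, rfl⟩ := Polynomial.map_surjective φ hφ T
    rw [← Polynomial.map_mul, map_eq_map_iff_C_dvd_sub hker] at hT
    obtain ⟨w, hw⟩ := hT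
    refine ⟨AdjoinRoot.mk f t, AdjoinRoot.mk f w, ?_⟩
    rw [← AdjoinRoot.mk_C, ← map_mul, ← map_mul, ← map_add, sub_eq_iff_eq_add'.1 hw]
    ring_nf
  · rintro ⟨a, b, hab⟩
    obtain ⟨t, rfl⟩ := AdjoinRoot.mk_surjective a
    obtain ⟨w, rfl⟩ := AdjoinRoot.mk_surjective b
    rw [← AdjoinRoot.mk_C, ← map_mul, ← map_mul, ← map_add, AdjoinRoot.mk_eq_mk] at hab
    have hϖ : φ ϖ = 0 := by
      rw [← RingHom.mem_ker, hker]
      exact Ideal.mem_span_singleton_self ϖ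
    have hdvd := hs.trans (map_dvd φ hab)
    rw [Polynomial.map_sub, Polynomial.map_add, Polynomial.map_mul, Polynomial.map_mul, map_C, hϖ,
      map_zero, mul_zero, add_zero] at hdvd
    exact (dvd_sub_right (Dvd.intro_left _ rfl)).1 hdvd

lemma mk_dvd_mk_iff (hφ : Function.Surjective φ) (hker : RingHom.ker φ = Ideal.span {ϖ})
    (hs : s.map φ ∣ f.map φ) (hsϖ : AdjoinRoot.mk f s ∣ AdjoinRoot.of f ϖ) :
    AdjoinRoot.mk f s ∣ AdjoinRoot.mk f P ↔ s.map φ ∣ P.map φ := by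
  rw [map_dvd_map_iff_mk_mem_span hφ hker hs, Ideal.span_pair_eq_span_left_iff_dvd.2 hsϖ,
    Ideal.mem_span_singleton]

lemma isRadical_mk (hφ : Function.Surjective φ) (hker : RingHom.ker φ = Ideal.span {ϖ})
    (hs : s.map φ ∣ f.map φ) (hsϖ : AdjoinRoot.mk f s ∣ AdjoinRoot.of f ϖ)
    (hrad : IsRadical (s.map φ)) : IsRadical (AdjoinRoot.mk f s) := fun N x hx => by
  obtain ⟨P, rfl⟩ := AdjoinRoot.mk_surjective x
  rw [← map_pow, mk_dvd_mk_iff hφ hker hs hsϖ, Polynomial.map_pow] at hx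
  exact (mk_dvd_mk_iff hφ hker hs hsϖ).2 (hrad N _ hx)

lemma of_mem_jacobson_bot (hf : f.Monic) (hϖ : ϖ ∈ (⊥ : Ideal A).jacobson) :
    AdjoinRoot.of f ϖ ∈ (⊥ : Ideal (AdjoinRoot f)).jacobson :=
  have : Module.Finite A (AdjoinRoot f) := hf.finite_adjoinRoot
  algebraMap_mem_jacobson_bot hϖ

lemma of_mem_nonZeroDivisors (hf : f.Monic) (hϖ : ϖ ∈ nonZeroDivisors A) :
    AdjoinRoot.of f ϖ ∈ nonZeroDivisors (AdjoinRoot f) := by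
  have : Module.Free A (AdjoinRoot f) := hf.free_adjoinRoot
  refine mem_nonZeroDivisors_iff_left.2 fun x hx => ?_
  have hsmul := Module.Flat.isSMulRegular_of_nonZeroDivisors (M := AdjoinRoot f) hϖ
  refine hsmul.right_eq_zero_of_smul ?_
  rwa [Algebra.smul_def]

lemma isUnit_mk_of_isCoprime_map (hφ : Function.Surjective φ)
    (hker : RingHom.ker φ = Ideal.span {ϖ}) (hϖ : ϖ ∈ (⊥ : Ideal A).jacobson) (hf : f.Monic)
    (hP : IsCoprime (P.map φ) (f.map φ)) : IsUnit (AdjoinRoot.mk f P) := by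
  obtain ⟨a, b, hab⟩ := hP
  obtain ⟨a, rfl⟩ := Polynomial.map_surjective φ hφ a
  have h1 : f.map φ ∣ (a * P - 1).map φ := ⟨-b, by
    rw [Polynomial.map_sub, Polynomial.map_mul, Polynomial.map_one]
    linear_combination hab⟩
  rw [map_dvd_map_iff_mk_mem_span hφ hker dvd_rfl, AdjoinRoot.mk_self, Ideal.span_insert_zero,
    Ideal.mem_span_singleton'] at h1
  obtain ⟨c, hc⟩ := h1
  have hunit := Ideal.mem_jacobson_bot.1 (of_mem_jacobson_bot hf hϖ) c
  rw [mul_comm, hc, map_sub, map_one, sub_add_cancel, map_mul] at hunit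
  exact isUnit_of_mul_isUnit_right hunit

lemma pow_mk_eq (n : ℕ) (hfgh : f = g ^ n + C ϖ * h) :
    AdjoinRoot.mk f g ^ n = -(AdjoinRoot.of f ϖ * AdjoinRoot.mk f h) := by
  rw [eq_neg_iff_add_eq_zero, ← AdjoinRoot.mk_C, ← map_pow, ← map_mul, ← map_add, ← hfgh,
    AdjoinRoot.mk_self]

lemma map_eq_map_pow (hker : RingHom.ker φ = Ideal.span {ϖ}) {n : ℕ}
    (hfgh : f = g ^ n + C ϖ * h) : f.map φ = g.map φ ^ n := by
  rw [← Polynomial.map_pow, map_eq_map_iff_C_dvd_sub hker, hfgh, add_sub_cancel_left]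
  exact dvd_mul_right _ _

lemma isIntegrallyClosedIn_of_isCoprime (B : Type*) [CommRing B] [Algebra (AdjoinRoot f) B]
    [IsLocalization.Away (AdjoinRoot.of f ϖ) B] (hφ : Function.Surjective φ)
    (hker : RingHom.ker φ = Ideal.span {ϖ}) (hϖ : ϖ ∈ (⊥ : Ideal A).jacobson)
    (hreg : ϖ ∈ nonZeroDivisors A) (hf : f.Monic) {n : ℕ} (hn : 2 ≤ n)
    (hfgh : f = g ^ n + C ϖ * h) (hcop : IsCoprime (g.map φ) (h.map φ)) :
    IsIntegrallyClosedIn (AdjoinRoot f) B := by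
  have hfmap := map_eq_map_pow hker hfgh
  have hγ := pow_mk_eq n hfgh
  have hη : IsUnit (AdjoinRoot.mk f h) :=
    isUnit_mk_of_isCoprime_map hφ hker hϖ hf (hfmap ▸ hcop.symm.pow_right)
  have hγϖ : AdjoinRoot.of f ϖ ∣ AdjoinRoot.mk f g ^ n := ⟨-AdjoinRoot.mk f h, by rw [hγ, mul_neg]⟩
  have hϖγ : AdjoinRoot.mk f g ^ n ∣ AdjoinRoot.of f ϖ := by
    rw [hγ, neg_dvd, hη.mul_right_dvd]
  have hg0 : g.map φ ≠ 0 := fun h0 =>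
    (hf.map φ).ne_zero (by rw [hfmap, h0, zero_pow (by omega)])
  obtain ⟨s, hs⟩ := Polynomial.map_surjective φ hφ (UniqueFactorizationMonoid.radical (g.map φ))
  have hsg : s.map φ ∣ g.map φ := hs ▸ UniqueFactorizationMonoid.radical_dvd_self
  have hgf : g.map φ ∣ f.map φ := hfmap ▸ dvd_pow_self _ (by omega)
  have hsγ : AdjoinRoot.mk f s ∣ AdjoinRoot.mk f g :=
    dvd_of_mem_span_pair_of_sq_dvd (of_mem_jacobson_bot hf hϖ) ((pow_dvd_pow _ hn).trans hϖγ)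
      ((map_dvd_map_iff_mk_mem_span hφ hker (hsg.trans hgf)).1 hsg)
  have hgϖ : AdjoinRoot.mk f g ∣ AdjoinRoot.of f ϖ := (dvd_pow_self _ (by omega)).trans hϖγ
  have hrad : IsRadical (AdjoinRoot.mk f s) :=
    isRadical_mk hφ hker (hsg.trans hgf) (hsγ.trans hgϖ)
      (hs ▸ UniqueFactorizationMonoid.isRadical_radical)
  obtain ⟨N, hN⟩ := UniqueFactorizationMonoid.exists_dvd_radical_self_pow hg0
  have hγs : AdjoinRoot.mk f g ∣ AdjoinRoot.mk f s ^ N := by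
    rw [← map_pow, mk_dvd_mk_iff hφ hker hgf hgϖ, Polynomial.map_pow, hs]
    exact hN
  refine isIntegrallyClosedIn_of_isRadical (of_mem_nonZeroDivisors hf hreg) hrad (hsγ.trans hgϖ)
    (N := N * n) ?_
  rw [pow_mul]
  exact hγϖ.trans (pow_dvd_pow_of_dvd hγs n)

lemma map_dvd_map_mul_pow (B : Type*) [CommRing B] [Algebra (AdjoinRoot f) B]
    [IsLocalization.Away (AdjoinRoot.of f ϖ) B] [IsIntegrallyClosedIn (AdjoinRoot f) B]
    (hφ : Function.Surjective φ) (hker : RingHom.ker φ = Ideal.span {ϖ}) {n : ℕ}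
    (hfgh : f = g ^ (n + 2) + C ϖ * h) {d e j : A[X]} (hg : g.map φ = (d * e).map φ)
    (hh : h.map φ = (d * j).map φ) : f.map φ ∣ (e * g ^ (n + 1)).map φ := by
  obtain ⟨u, hu⟩ := (map_eq_map_iff_C_dvd_sub hker).1 hg
  obtain ⟨l, hl⟩ := (map_eq_map_iff_C_dvd_sub hker).1 hh
  -- `e g ^ (n + 1) / ϖ` is a root of a monic quadratic polynomial over `A[X]/(f)`.
  have hquad : AdjoinRoot.mk f (e * g ^ (n + 1)) ^ 2
      + AdjoinRoot.mk f j * AdjoinRoot.of f ϖ * AdjoinRoot.mk f (e * g ^ (n + 1))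
      + AdjoinRoot.mk f (e * g ^ n * (e * l - u * j)) * AdjoinRoot.of f ϖ ^ 2 = 0 := by
    rw [← AdjoinRoot.mk_C]
    simp only [← map_pow (AdjoinRoot.mk f), ← map_mul, ← map_add, AdjoinRoot.mk_eq_zero]
    refine ⟨e ^ 2 * g ^ n, ?_⟩
    rw [hfgh]
    linear_combination e * g ^ n * C ϖ * j * hu - e ^ 2 * g ^ n * C ϖ * hl
  rw [map_dvd_map_iff_mk_mem_span hφ hker dvd_rfl, AdjoinRoot.mk_self, Ideal.span_insert_zero,
    Ideal.mem_span_singleton]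
  exact dvd_of_sq_add_eq_zero B hquad

lemma isCoprime_of_isIntegrallyClosedIn (B : Type*) [CommRing B] [Algebra (AdjoinRoot f) B]
    [IsLocalization.Away (AdjoinRoot.of f ϖ) B] [IsIntegrallyClosedIn (AdjoinRoot f) B]
    (hφ : Function.Surjective φ) (hker : RingHom.ker φ = Ideal.span {ϖ}) (hf : f.Monic) {n : ℕ}
    (hn : 2 ≤ n) (hfgh : f = g ^ n + C ϖ * h) : IsCoprime (g.map φ) (h.map φ) := by
  obtain ⟨n, rfl⟩ := Nat.exists_eq_add_of_le' hn
  have hfmap := map_eq_map_pow hker hfgh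
  have hg0 : g.map φ ≠ 0 := fun h0 =>
    (hf.map φ).ne_zero (by rw [hfmap, h0, zero_pow (by omega)])
  rw [← EuclideanDomain.gcd_isUnit_iff]
  obtain ⟨E, hE⟩ := EuclideanDomain.gcd_dvd_left (g.map φ) (h.map φ)
  obtain ⟨J, hJ⟩ := EuclideanDomain.gcd_dvd_right (g.map φ) (h.map φ)
  obtain ⟨d, hd⟩ := Polynomial.map_surjective φ hφ (EuclideanDomain.gcd (g.map φ) (h.map φ))
  obtain ⟨e, rfl⟩ := Polynomial.map_surjective φ hφ E
  obtain ⟨j, rfl⟩ := Polynomial.map_surjective φ hφ J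
  rw [← hd, ← Polynomial.map_mul] at hE hJ
  have hdvd := map_dvd_map_mul_pow B hφ hker hfgh hE hJ
  rw [hfmap, Polynomial.map_mul, Polynomial.map_pow, pow_succ',
    mul_dvd_mul_iff_right (pow_ne_zero _ hg0), hE, Polynomial.map_mul] at hdvd
  have he0 : e.map φ ≠ 0 := right_ne_zero_of_mul (Polynomial.map_mul φ ▸ hE ▸ hg0)
  rw [← hd, isUnit_iff_dvd_one, ← mul_dvd_mul_iff_right he0, one_mul]
  exact hdvd

theorem isIntegrallyClosedIn_adjoinRoot_iff (B : Type*) [CommRing B] [Algebra (AdjoinRoot f) B]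
    [IsLocalization.Away (AdjoinRoot.of f ϖ) B] (hφ : Function.Surjective φ)
    (hker : RingHom.ker φ = Ideal.span {ϖ}) (hϖ : ϖ ∈ (⊥ : Ideal A).jacobson)
    (hreg : ϖ ∈ nonZeroDivisors A) (hf : f.Monic) {n : ℕ} (hn : 2 ≤ n)
    (hfgh : f = g ^ n + C ϖ * h) :
    IsIntegrallyClosedIn (AdjoinRoot f) B ↔ IsCoprime (g.map φ) (h.map φ) :=
  ⟨fun _ => isCoprime_of_isIntegrallyClosedIn B hφ hker hf hn hfgh,
    isIntegrallyClosedIn_of_isCoprime B hφ hker hϖ hreg hf hn hfgh⟩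

end Dedekind

section CoprimePairs

variable (F : Type*) [Field F]

/-- The monic polynomials of degree exactly `m`. -/
def monicsOfNatDegree (m : ℕ) : Set F[X] :=
  {G | G.Monic ∧ G.natDegree = m}

/-- The coprime pairs `(G, h)` with `G` monic of degree exactly `m` and `h` of degree less than `n`
(possibly zero). -/
def coprimePairs (m n : ℕ) : Set (F[X] × F[X]) :=
  {x | x ∈ monicsOfNatDegree F m ×ˢ (degreeLT F n : Set F[X]) ∧ IsCoprime x.1 x.2}

lemma ncard_degreeLT (n : ℕ) : (degreeLT F n : Set F[X]).ncard = Nat.card F ^ n := by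
  rw [← Nat.card_coe_set_eq]
  exact (Nat.card_congr (degreeLTEquiv F n).toEquiv).trans (by rw [Nat.card_fun, Nat.card_fin])

lemma ncard_monicsOfNatDegree (m : ℕ) : (monicsOfNatDegree F m).ncard = Nat.card F ^ m := by
  rw [← ncard_degreeLT, ← Nat.card_coe_set_eq, ← Nat.card_coe_set_eq]
  exact Nat.card_congr (monicEquivDegreeLT m)

section Finite

variable [Finite F]

lemma finite_degreeLT (n : ℕ) : (degreeLT F n : Set F[X]).Finite :=
  Finite.of_equiv _ (degreeLTEquiv F n).symm.toEquiv

lemma finite_monicsOfNatDegree (m : ℕ) : (monicsOfNatDegree F m).Finite :=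
  have := (finite_degreeLT F m).to_subtype
  Finite.of_equiv _ (monicEquivDegreeLT m).symm

lemma finite_coprimePairs (m n : ℕ) : (coprimePairs F m n).Finite :=
  ((finite_monicsOfNatDegree F m).prod (finite_degreeLT F n)).subset fun _ hx => hx.1

end Finite

variable {F}

lemma exists_monic_mul_of_ne_zero {P : F[X]} (hP : P ≠ 0) (Q : F[X]) :
    ∃ D G h : F[X], D.Monic ∧ IsCoprime G h ∧ P = D * G ∧ Q = D * h := by
  set D := EuclideanDomain.gcd P Q
  have hD0 : D ≠ 0 := fun h0 => hP (EuclideanDomain.gcd_eq_zero_iff.1 h0).1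
  obtain ⟨G, hG⟩ : D ∣ P := EuclideanDomain.gcd_dvd_left P Q
  obtain ⟨h, hh⟩ : D ∣ Q := EuclideanDomain.gcd_dvd_right P Q
  have hcop : IsCoprime G h := by
    refine ⟨EuclideanDomain.gcdA P Q, EuclideanDomain.gcdB P Q, mul_left_cancel₀ hD0 ?_⟩
    have hbezout := EuclideanDomain.gcd_eq_gcd_ab P Q
    linear_combination -hbezout - EuclideanDomain.gcdA P Q * hG - EuclideanDomain.gcdB P Q * hh
  have hc : D.leadingCoeff ≠ 0 := leadingCoeff_ne_zero.2 hD0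
  have hCC : C D.leadingCoeff⁻¹ * C D.leadingCoeff = 1 := by
    rw [← C_mul, inv_mul_cancel₀ hc, C_1]
  refine ⟨D * C D.leadingCoeff⁻¹, C D.leadingCoeff * G, C D.leadingCoeff * h,
    monic_mul_leadingCoeff_inv hD0,
    (isCoprime_mul_unit_left (isUnit_C.2 hc.isUnit) G h).2 hcop, ?_, ?_⟩
  · linear_combination hG - D * G * hCC
  · linear_combination hh - D * h * hCC

lemma dvd_of_mul_eq_mul_of_isCoprime {R : Type*} [CommRing R] {a b c d e f : R}
    (hbc : IsCoprime b c) (hb : a * b = d * e) (hc : a * c = d * f) : d ∣ a := by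
  obtain ⟨u, v, huv⟩ := hbc
  exact ⟨u * e + v * f, by linear_combination u * hb + v * hc - a * huv⟩

lemma degree_mul_lt_iff {D : F[X]} (hD : D.Monic) (h : F[X]) (n : ℕ) :
    (D * h).degree < n ↔ h.degree < (n - D.natDegree : ℕ) := by
  rcases eq_or_ne h 0 with rfl | h0
  · simp only [mul_zero, degree_zero, WithBot.bot_lt_natCast]
  · rw [degree_eq_natDegree (mul_ne_zero hD.ne_zero h0), degree_eq_natDegree h0,
      hD.natDegree_mul' h0]
    norm_cast
    omega

lemma bijOn_mul_coprimePairs (m n : ℕ) :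
    Set.BijOn (fun x : F[X] × F[X] × F[X] => (x.1 * x.2.1, x.1 * x.2.2))
      (⋃ d ∈ Set.Iic m, monicsOfNatDegree F d ×ˢ coprimePairs F (m - d) (n - d))
      (monicsOfNatDegree F m ×ˢ degreeLT F n) := by
  have hmem (D G h : F[X]) : (D, G, h) ∈
      ⋃ d ∈ Set.Iic m, monicsOfNatDegree F d ×ˢ coprimePairs F (m - d) (n - d) ↔
      (D.Monic ∧ G.Monic ∧ IsCoprime G h) ∧ (D * G).natDegree = m ∧ (D * h).degree < n := by
    simp only [Set.mem_iUnion, Set.mem_prod, monicsOfNatDegree, coprimePairs, Set.mem_ofPred_eq,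
      SetLike.mem_coe, mem_degreeLT, Set.mem_Iic]
    constructor
    · rintro ⟨d, hd, ⟨hD, rfl⟩, ⟨⟨hG, hGm⟩, hh⟩, hcop⟩
      exact ⟨⟨hD, hG, hcop⟩, by rw [hD.natDegree_mul hG]; omega, (degree_mul_lt_iff hD h n).2 hh⟩
    · rintro ⟨⟨hD, hG, hcop⟩, hm, hh⟩
      rw [hD.natDegree_mul hG] at hm
      exact ⟨_, by omega, ⟨hD, rfl⟩, ⟨⟨hG, by omega⟩, (degree_mul_lt_iff hD h n).1 hh⟩, hcop⟩
  refine ⟨?_, ?_, ?_⟩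
  · rintro ⟨D, G, h⟩ hx
    obtain ⟨⟨hD, hG, -⟩, hm, hn⟩ := (hmem D G h).1 hx
    exact ⟨⟨hD.mul hG, hm⟩, mem_degreeLT.2 hn⟩
  · rintro ⟨D, G, h⟩ hx ⟨D', G', h'⟩ hx' heq
    obtain ⟨⟨hD, -, hcop⟩, -⟩ := (hmem D G h).1 hx
    obtain ⟨⟨hD', -, hcop'⟩, -⟩ := (hmem D' G' h').1 hx'
    obtain ⟨hG, hh⟩ : D * G = D' * G' ∧ D * h = D' * h' := Prod.mk.inj heq
    obtain rfl : D = D' := eq_of_monic_of_associated hD hD' <| associated_of_dvd_dvd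
      (dvd_of_mul_eq_mul_of_isCoprime hcop' hG.symm hh.symm)
      (dvd_of_mul_eq_mul_of_isCoprime hcop hG hh)
    rw [mul_left_cancel₀ hD.ne_zero hG, mul_left_cancel₀ hD.ne_zero hh]
  · rintro ⟨P, Q⟩ ⟨⟨hP, hm⟩, hQ⟩
    obtain ⟨D, G, h, hD, hcop, rfl, rfl⟩ := exists_monic_mul_of_ne_zero hP.ne_zero Q
    exact ⟨(D, G, h), (hmem D G h).2 ⟨⟨hD, hD.of_mul_monic_left hP, hcop⟩, hm, mem_degreeLT.1 hQ⟩,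
      rfl⟩

variable (F) [Finite F]

lemma sum_ncard_coprimePairs (m n : ℕ) :
    ∑ d ∈ Finset.range (m + 1), Nat.card F ^ d * (coprimePairs F (m - d) (n - d)).ncard =
      Nat.card F ^ (m + n) := by
  have hfin (d : ℕ) : (monicsOfNatDegree F d ×ˢ coprimePairs F (m - d) (n - d)).Finite :=
    (finite_monicsOfNatDegree F d).prod (finite_coprimePairs F _ _)
  have hdisj : (Set.Iic m).PairwiseDisjoint
      fun d => monicsOfNatDegree F d ×ˢ coprimePairs F (m - d) (n - d) :=
    fun d _ e _ hde => Set.disjoint_left.2 fun x hx hx' =>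
      hde (hx.1.2.symm.trans hx'.1.2)
  rw [pow_add, ← ncard_monicsOfNatDegree, ← ncard_degreeLT, ← Set.ncard_prod,
    ← (bijOn_mul_coprimePairs m n).ncard_eq,
    (Set.finite_Iic m).ncard_biUnion (fun d _ => hfin d) hdisj, ← Finset.coe_Iic,
    finsum_mem_coe_finset, ← Nat.range_succ_eq_Iic]
  simp only [Set.ncard_prod, ncard_monicsOfNatDegree]

lemma ncard_coprimePairs_succ_succ (m n : ℕ) :
    (coprimePairs F (m + 1) (n + 1)).ncard + Nat.card F ^ (m + n + 1) =
      Nat.card F ^ (m + n + 2) := by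
  have h := sum_ncard_coprimePairs F (m + 1) (n + 1)
  have hshift : ∑ d ∈ Finset.range (m + 1), Nat.card F ^ (d + 1) *
      (coprimePairs F (m + 1 - (d + 1)) (n + 1 - (d + 1))).ncard =
      Nat.card F ^ (m + n + 1) := by
    simp only [Nat.add_sub_add_right, pow_succ', mul_assoc, ← Finset.mul_sum,
      sum_ncard_coprimePairs]
  rw [Finset.sum_range_succ', hshift, pow_zero, one_mul, add_comm, Nat.sub_zero, Nat.sub_zero] at h
  exact h.trans (by ring)

lemma ncard_coprimePairs {m n : ℕ} (hm : m ≠ 0) (hn : n ≠ 0) :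
    ((coprimePairs F m n).ncard : ℝ) = (Nat.card F : ℝ) ^ (m + n) * (1 - (Nat.card F : ℝ)⁻¹) := by
  obtain ⟨m, rfl⟩ := Nat.exists_eq_add_one_of_ne_zero hm
  obtain ⟨n, rfl⟩ := Nat.exists_eq_add_one_of_ne_zero hn
  have hcard : (Nat.card F : ℝ) ≠ 0 := Nat.cast_ne_zero.2 Nat.card_pos.ne'
  have h : ((coprimePairs F (m + 1) (n + 1)).ncard : ℝ) + (Nat.card F : ℝ) ^ (m + n + 1) =
      (Nat.card F : ℝ) ^ (m + n + 2) := by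
    exact_mod_cast ncard_coprimePairs_succ_succ F m n
  rw [eq_sub_of_add_eq h]
  field_simp
  ring

end CoprimePairs

section MonicForms

section Dehomogenization

variable {A : Type*} [CommRing A] (n : ℕ) (c : ℕ → A)

/-- The dehomogenization `F(x, 1)` of the binary form of degree `n` with coefficients `c`, over the
coefficient ring itself (`binPoly` is its image over a field). -/
def formPoly : A[X] :=
  ∑ i ∈ Finset.range (n + 1), C (c i) * X ^ (n - i)

lemma coeff_formPoly {j : ℕ} (hj : j ≤ n) : (formPoly n c).coeff j = c (n - j) := by
  simp only [formPoly, finsetSum_coeff, coeff_C_mul_X_pow]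
  rw [Finset.sum_eq_single (n - j) (fun i hi hij => if_neg ?_) (fun h => absurd ?_ h),
    if_pos (by omega)]
  · rw [Finset.mem_range] at hi
    omega
  · rw [Finset.mem_range]
    omega

lemma natDegree_formPoly_le : (formPoly n c).natDegree ≤ n :=
  natDegree_sum_le_of_forall_le _ _ fun i _ =>
    (natDegree_C_mul_X_pow_le (c i) (n - i)).trans (Nat.sub_le n i)

lemma map_formPoly {S : Type*} [CommRing S] (φ : A →+* S) :
    (formPoly n c).map φ = formPoly n fun i => φ (c i) := by
  simp only [formPoly, Polynomial.map_sum, Polynomial.map_mul, map_C, Polynomial.map_pow, map_X]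

variable {n c} (hc : c 0 = 1)
include hc

lemma monic_formPoly : (formPoly n c).Monic :=
  monic_of_natDegree_le_of_coeff_eq_one n (natDegree_formPoly_le n c) <| by
    rw [coeff_formPoly n c le_rfl, Nat.sub_self, hc]

lemma natDegree_formPoly [Nontrivial A] : (formPoly n c).natDegree = n :=
  natDegree_eq_of_le_of_coeff_ne_zero (natDegree_formPoly_le n c) <| by
    rw [coeff_formPoly n c le_rfl, Nat.sub_self, hc]
    exact one_ne_zero

end Dehomogenization

variable {R K} {n : ℕ} {c : ℕ → R}

lemma aeval_θF (P : R[X]) :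
    aeval (θF R K n c) P = AdjoinRoot.mk (binPoly R K n c) (P.map (algebraMap R K)) := by
  rw [← AdjoinRoot.aeval_eq, aeval_map_algebraMap]
  rfl

lemma binPoly_eq_map_formPoly : binPoly R K n c = (formPoly n c).map (algebraMap R K) := by
  rw [map_formPoly]
  rfl

lemma aeval_θF_formPoly : aeval (θF R K n c) (formPoly n c) = 0 := by
  rw [aeval_θF, ← binPoly_eq_map_formPoly, AdjoinRoot.mk_self]

instance : Algebra (AdjoinRoot (formPoly n c)) (KF R K n c) :=
  (AdjoinRoot.liftAlgHom (formPoly n c) (Algebra.ofId R (KF R K n c)) (θF R K n c)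
    aeval_θF_formPoly).toAlgebra

lemma algebraMap_mk (P : R[X]) :
    algebraMap (AdjoinRoot (formPoly n c)) (KF R K n c) (AdjoinRoot.mk (formPoly n c) P) =
      aeval (θF R K n c) P :=
  AdjoinRoot.liftAlgHom_mk ..

instance : IsScalarTower R (AdjoinRoot (formPoly n c)) (KF R K n c) :=
  .of_algebraMap_eq fun r => by
    rw [AdjoinRoot.algebraMap_eq, ← AdjoinRoot.mk_C, algebraMap_mk, aeval_C]

section Monic

variable (hc : c 0 = 1)
include hc

lemma algebraMap_adjoinRoot_injective (hinj : Function.Injective (algebraMap R K)) :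
    Function.Injective (algebraMap (AdjoinRoot (formPoly n c)) (KF R K n c)) := by
  rw [injective_iff_map_eq_zero]
  intro x hx
  obtain ⟨P, rfl⟩ := AdjoinRoot.mk_surjective x
  rw [algebraMap_mk, aeval_θF, AdjoinRoot.mk_eq_zero, binPoly_eq_map_formPoly] at hx
  exact AdjoinRoot.mk_eq_zero.2 (map_dvd_map _ hinj (monic_formPoly hc) |>.1 hx)

lemma isLocalization_away_KF {r : R} (hr : r ∈ nonZeroDivisors R) [IsLocalization.Away r K] :
    IsLocalization.Away (AdjoinRoot.of (formPoly n c) r) (KF R K n c) := by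
  have hinj : Function.Injective (algebraMap R K) :=
    IsLocalization.injective K (Submonoid.powers_le.2 hr)
  have hmap : algebraMap (AdjoinRoot (formPoly n c)) (KF R K n c) (AdjoinRoot.of (formPoly n c) r) =
      AdjoinRoot.of (binPoly R K n c) (algebraMap R K r) :=
    (IsScalarTower.algebraMap_apply R (AdjoinRoot (formPoly n c)) (KF R K n c) r).symm
  refine IsLocalization.Away.mk _ ?_ (fun x => ?_) fun a b hab =>
    ⟨0, congrArg _ (algebraMap_adjoinRoot_injective hc hinj hab)⟩
  · rw [hmap]
    exact (IsLocalization.Away.algebraMap_isUnit r).map _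
  · obtain ⟨Q, rfl⟩ := AdjoinRoot.mk_surjective x
    obtain ⟨_, ⟨k, rfl⟩, hk⟩ :=
      IsLocalization.integerNormalization_spec (Submonoid.powers r) Q
    refine ⟨k, AdjoinRoot.mk _ (IsLocalization.integerNormalization (Submonoid.powers r) Q), ?_⟩
    rw [hmap, algebraMap_mk, aeval_θF, hk, algebra_compatible_smul K, smul_eq_C_mul, map_mul,
      AdjoinRoot.mk_C, map_pow, map_pow, mul_comm]

lemma θF_pow_mem_RFmod (i : ℕ) (hi : i < n) : θF R K n c ^ i ∈ RFmod R K n c := by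
  induction i using Nat.strong_induction_on with
  | _ i ih =>
    obtain _ | i := i
    · rw [pow_zero]
      exact Submodule.subset_span (.inl rfl)
    · have hζ : ζF R K n c (i + 1) ∈ RFmod R K n c :=
        Submodule.subset_span (.inr ⟨i + 1, by omega, by omega, rfl⟩)
      rw [ζF, Finset.sum_range_succ', hc, map_one, one_mul, Nat.sub_zero] at hζ
      refine (Submodule.add_mem_iff_right _ (Submodule.sum_mem _ fun j hj => ?_)).1 hζ
      rw [Finset.mem_range] at hj
      rw [← Algebra.smul_def]
      exact Submodule.smul_mem _ _ (ih _ (by omega) (by omega))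

lemma coe_RFmod :
    (RFmod R K n c : Set (KF R K n c)) =
      Set.range (algebraMap (AdjoinRoot (formPoly n c)) (KF R K n c)) := by
  refine Set.Subset.antisymm ?_ ?_
  · change RFmod R K n c ≤ LinearMap.range
      (IsScalarTower.toAlgHom R (AdjoinRoot (formPoly n c)) (KF R K n c)).toLinearMap
    refine Submodule.span_le.2 ?_
    rintro _ (rfl | ⟨i, -, -, rfl⟩)
    · exact ⟨1, map_one (algebraMap (AdjoinRoot (formPoly n c)) (KF R K n c))⟩
    · refine ⟨AdjoinRoot.mk _ (∑ j ∈ Finset.range i, C (c j) * X ^ (i - j)),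
        (algebraMap_mk _).trans ?_⟩
      simp only [map_sum, map_mul, aeval_C, map_pow, aeval_X, ζF]
  · rintro _ ⟨x, rfl⟩
    have : Nontrivial R := (algebraMap R K).domain_nontrivial
    have hroot : algebraMap _ (KF R K n c) (AdjoinRoot.root (formPoly n c)) = θF R K n c := by
      rw [← AdjoinRoot.mk_X, algebraMap_mk, aeval_X]
    rw [← (AdjoinRoot.powerBasis' (monic_formPoly hc)).basis.sum_repr x, map_sum]
    refine Submodule.sum_mem _ fun i _ => ?_
    rw [PowerBasis.basis_eq_pow, AdjoinRoot.powerBasis'_gen, Algebra.smul_def, map_mul, map_pow,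
      hroot, ← IsScalarTower.algebraMap_apply, ← Algebra.smul_def]
    have hi : (i : ℕ) < n := by
      simpa only [AdjoinRoot.powerBasis'_dim, natDegree_formPoly hc] using i.2
    exact Submodule.smul_mem _ _ (θF_pow_mem_RFmod hc i hi)

lemma isMaxOrder_iff (hinj : Function.Injective (algebraMap R K)) :
    IsMaxOrder R K n c ↔ IsIntegrallyClosedIn (AdjoinRoot (formPoly n c)) (KF R K n c) := by
  have : Module.Finite R (AdjoinRoot (formPoly n c)) := (monic_formPoly hc).finite_adjoinRoot
  rw [IsMaxOrder, ← SetLike.coe_set_eq, coe_RFmod hc, isIntegrallyClosedIn_iff,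
    and_iff_right (algebraMap_adjoinRoot_injective hc hinj)]
  constructor
  · intro h x hx
    exact h.ge (isIntegral_trans x hx)
  · intro h
    refine Set.Subset.antisymm ?_ fun x hx => h (IsIntegral.tower_top hx)
    rintro _ ⟨x, rfl⟩
    exact (Algebra.IsIntegral.isIntegral (R := R) x).algebraMap

end Monic

lemma exists_homogenize_eq_sq_iff {A : Type*} [CommRing A] [IsDomain A] {m : ℕ} {P : A[X]}
    (hP : P.Monic) (hdeg : P.natDegree ≤ 2 * m) :
    (∃ H : MvPolynomial (Fin 2) A, P.homogenize (2 * m) = H ^ 2) ↔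
      ∃ G : A[X], G.Monic ∧ P = G ^ 2 := by
  constructor
  · rintro ⟨H, hH⟩
    set Q := MvPolynomial.aeval ![(X : A[X]), 1] H with hQ
    have hPQ : P = Q ^ 2 := by
      rw [hQ, ← map_pow, ← hH, aeval_homogenize_X_one P hdeg]
    have hlc : Q.leadingCoeff ^ 2 = 1 := by
      rw [← leadingCoeff_pow, ← hPQ, hP]
    refine ⟨C Q.leadingCoeff * Q, ?_, ?_⟩
    · rw [Monic, leadingCoeff_mul, leadingCoeff_C, ← sq, hlc]
    · rw [mul_pow, ← C_pow, hlc, C_1, one_mul, hPQ]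
  · rintro ⟨G, -, rfl⟩
    rw [natDegree_pow, mul_le_mul_iff_right₀ two_pos] at hdeg
    exact ⟨G.homogenize m, by rw [sq, sq, two_mul, homogenize_mul _ _ hdeg hdeg]⟩

variable {p}

lemma redForm_eq_homogenize (n : ℕ) (c : ℕ → ℤ_[p]) :
    redForm p n c = ((formPoly n c).map PadicInt.toZMod).homogenize n := by
  rw [map_formPoly, redForm, formPoly, homogenize_finsetSum]
  refine Finset.sum_congr rfl fun i hi => ?_
  rw [Finset.mem_range] at hi
  rw [homogenize_C_mul, homogenize_X_pow (by omega), Nat.sub_sub_self (by omega), mul_assoc]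

instance : IsLocalization.Away (p : ℤ_[p]) ℚ_[p] := by
  refine IsLocalization.Away.mk _ ?_ (fun x => ?_) fun a b hab =>
    ⟨0, congrArg _ (IsFractionRing.injective ℤ_[p] ℚ_[p] hab)⟩
  · rw [map_natCast, isUnit_iff_ne_zero, Nat.cast_ne_zero]
    exact NeZero.ne p
  · obtain ⟨a, b, hb, rfl⟩ := IsFractionRing.div_surjective (A := ℤ_[p]) x
    have hb0 : b ≠ 0 := nonZeroDivisors.ne_zero hb
    refine ⟨b.valuation, a * ((PadicInt.unitCoeff hb0)⁻¹ : ℤ_[p]ˣ), ?_⟩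
    have hb0' : algebraMap ℤ_[p] ℚ_[p] b ≠ 0 := by simpa using hb0
    rw [div_mul_eq_mul_div, div_eq_iff hb0', ← map_pow, ← map_mul, ← map_mul]
    rw [mul_assoc, (Units.inv_mul_eq_iff_eq_mul _).2 (PadicInt.unitCoeff_spec hb0)]

end MonicForms

section Haar

lemma measure_preimage_eq_ncard_div_card {G H : Type*} [AddGroup G] [MeasurableSpace G]
    [MeasurableAdd G] (μ : Measure G) [μ.IsAddLeftInvariant] [IsProbabilityMeasure μ] [AddGroup H]
    [Finite H] {φ : G →+ H} (hφ : Function.Surjective φ) (hker : MeasurableSet (φ.ker : Set G))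
    (S : Set H) : μ (φ ⁻¹' S) = S.ncard / Nat.card H := by
  have hfiber (g : G) : φ ⁻¹' {φ g} = (-g + ·) ⁻¹' φ.ker := by
    ext x
    simp only [Set.mem_preimage, Set.mem_singleton_iff, SetLike.mem_coe, AddMonoidHom.mem_ker,
      map_add, map_neg, neg_add_eq_zero, eq_comm (a := φ g)]
  have hindex : (Nat.card H : ENNReal) * μ φ.ker = 1 := by
    rw [← AddSubgroup.card_top, ← AddMonoidHom.range_eq_top.2 hφ, ← AddSubgroup.index_ker,
      AddSubgroup.index_mul_measure _ hker, measure_univ]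
  have hmeasure (h : H) : μ (φ ⁻¹' {h}) = (Nat.card H : ENNReal)⁻¹ := by
    obtain ⟨g, rfl⟩ := hφ h
    rw [hfiber, measure_preimage_add]
    exact ENNReal.eq_inv_of_mul_eq_one_left (by rwa [mul_comm])
  have hmeas (h : H) : MeasurableSet (φ ⁻¹' {h}) := by
    obtain ⟨g, rfl⟩ := hφ h
    rw [hfiber]
    exact measurable_const_add _ hker
  rw [← S.toFinite.coe_toFinset, ← sum_measure_preimage_singleton _ fun h _ => hmeas h,
    Finset.sum_congr rfl fun h _ => hmeasure h, Finset.sum_const, Set.ncard_coe_finset,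
    nsmul_eq_mul, div_eq_mul_inv]

variable {p} (n : ℕ)

instance : (haarP p n).IsAddHaarMeasure := by
  unfold haarP
  infer_instance

instance : IsProbabilityMeasure (haarP p n) := ⟨Measure.addHaarMeasure_self⟩

lemma isClosed_ker_toZModPow (k : ℕ) :
    IsClosed (RingHom.ker (PadicInt.toZModPow (p := p) k) : Set ℤ_[p]) := by
  have hball : (RingHom.ker (PadicInt.toZModPow (p := p) k) : Set ℤ_[p]) =
      Metric.closedBall 0 ((p : ℝ) ^ (-k : ℤ)) := by
    ext x
    rw [PadicInt.ker_toZModPow, SetLike.mem_coe, mem_closedBall_zero_iff,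
      PadicInt.norm_le_pow_iff_mem_span_pow]
  exact hball ▸ Metric.isClosed_closedBall

lemma haarP_preimage_toZModPow (k : ℕ) (S : Set (Fin n → ZMod (p ^ k))) :
    haarP p n ((PadicInt.toZModPow k ∘ ·) ⁻¹' S) = S.ncard / (p : ENNReal) ^ (k * n) := by
  set φ := (PadicInt.toZModPow (p := p) k).toAddMonoidHom.compLeft (Fin n)
  have hker : (φ.ker : Set (Fin n → ℤ_[p])) =
      Set.univ.pi fun _ => RingHom.ker (PadicInt.toZModPow (p := p) k) := by
    ext v
    simp only [SetLike.mem_coe, AddMonoidHom.mem_ker, funext_iff, Set.mem_univ_pi, RingHom.mem_ker]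
    rfl
  have hmeas : MeasurableSet (φ.ker : Set (Fin n → ℤ_[p])) :=
    hker ▸ (isClosed_set_pi fun _ _ => isClosed_ker_toZModPow k).measurableSet
  have hsurj : Function.Surjective φ :=
    (ZMod.ringHom_surjective (PadicInt.toZModPow (p := p) k)).comp_left
  have : NeZero (p ^ k) := ⟨pow_ne_zero _ (NeZero.ne p)⟩
  have h := measure_preimage_eq_ncard_div_card (haarP p n) hsurj hmeas S
  rw [Nat.card_fun, Nat.card_zmod, Nat.card_fin, ← pow_mul, Nat.cast_pow] at h
  exact h

end Haar

section SquareLift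

variable {A k : Type*} [CommRing A] [Field k] {φ : A →+* k}

lemma exists_map_eq_and_degree_eq (hφ : Function.Surjective φ) (P : k[X]) :
    ∃ Q : A[X], Q.map φ = P ∧ Q.degree = P.degree ∧ (P.Monic → Q.Monic) := by
  have hP := mem_lifts_of_surjective hφ P
  by_cases hmonic : P.Monic
  · obtain ⟨Q, hmap, hdeg, hQ⟩ := lifts_and_degree_eq_and_monic hP hmonic
    exact ⟨Q, hmap, hdeg, fun _ => hQ⟩
  · obtain ⟨Q, hmap, hdeg⟩ := exists_degree_eq_of_mem_lifts hP
    exact ⟨Q, hmap, hdeg, fun h => absurd h hmonic⟩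

/-- A chosen lift of a polynomial along a surjection, of the same degree, and monic if the
polynomial is. -/
def polyLift (hφ : Function.Surjective φ) (P : k[X]) : A[X] :=
  (exists_map_eq_and_degree_eq hφ P).choose

/-- The lift `G² + ϖ h` of the pair of residue polynomials `(G, h)`. -/
def squareLift (hφ : Function.Surjective φ) (ϖ : A) (x : k[X] × k[X]) : A[X] :=
  polyLift hφ x.1 ^ 2 + C ϖ * polyLift hφ x.2

variable (hφ : Function.Surjective φ)

lemma map_polyLift (P : k[X]) : (polyLift hφ P).map φ = P :=
  (exists_map_eq_and_degree_eq hφ P).choose_spec.1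

lemma degree_polyLift (P : k[X]) : (polyLift hφ P).degree = P.degree :=
  (exists_map_eq_and_degree_eq hφ P).choose_spec.2.1

lemma monic_polyLift {P : k[X]} (hP : P.Monic) : (polyLift hφ P).Monic :=
  (exists_map_eq_and_degree_eq hφ P).choose_spec.2.2 hP

lemma natDegree_polyLift_sq {P : k[X]} (hP : P.Monic) :
    (polyLift hφ P ^ 2).natDegree = 2 * P.natDegree := by
  rw [(monic_polyLift hφ hP).natDegree_pow, natDegree_eq_of_degree_eq (degree_polyLift hφ P)]

lemma degree_C_mul_polyLift_lt (ϖ : A) {m : ℕ} {x : k[X] × k[X]}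
    (hx : x ∈ coprimePairs k m (2 * m)) :
    (C ϖ * polyLift hφ x.2).degree < (polyLift hφ x.1 ^ 2).degree := by
  obtain ⟨⟨⟨hmonic, hdeg⟩, hlt⟩, -⟩ := hx
  have : Nontrivial A := φ.domain_nontrivial
  rw [degree_eq_natDegree ((monic_polyLift hφ hmonic).pow 2).ne_zero,
    natDegree_polyLift_sq hφ hmonic, hdeg]
  rw [← smul_eq_C_mul]
  refine (degree_smul_le ϖ _).trans_lt ?_
  rw [degree_polyLift]
  exact mem_degreeLT.1 hlt

lemma monic_squareLift (ϖ : A) {m : ℕ} {x : k[X] × k[X]} (hx : x ∈ coprimePairs k m (2 * m)) :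
    (squareLift hφ ϖ x).Monic :=
  ((monic_polyLift hφ hx.1.1.1).pow 2).add_of_left (degree_C_mul_polyLift_lt hφ ϖ hx)

lemma natDegree_squareLift (ϖ : A) {m : ℕ} {x : k[X] × k[X]} (hx : x ∈ coprimePairs k m (2 * m)) :
    (squareLift hφ ϖ x).natDegree = 2 * m := by
  rw [squareLift, natDegree_add_eq_left_of_degree_lt (degree_C_mul_polyLift_lt hφ ϖ hx),
    natDegree_polyLift_sq hφ hx.1.1.1, hx.1.1.2]

lemma eq_of_monic_of_sq_eq_sq {F : Type*} [Field F] {P Q : F[X]} (hP : P.Monic) (hQ : Q.Monic)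
    (h : P ^ 2 = Q ^ 2) : P = Q := by
  refine eq_of_monic_of_associated hP hQ ?_
  obtain rfl | rfl := sq_eq_sq_iff_eq_or_eq_neg.1 h
  · exact .refl P
  · exact (Associated.refl Q).neg_left

lemma degree_lt_of_eq_add_C_mul {ϖ : A} (hϖ : ϖ ∈ nonZeroDivisors A) {f g h : A[X]}
    (hf : f.Monic) (hg : g.Monic) (hdeg : f.natDegree = g.natDegree) (hfgh : f = g + C ϖ * h) :
    h.degree < f.natDegree := by
  nontriviality A
  have hlt : (f - g).degree < f.degree := degree_sub_lt_left
    (by rw [degree_eq_natDegree hf.ne_zero, degree_eq_natDegree hg.ne_zero, hdeg]) hf.ne_zero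
    (hf.leadingCoeff.trans hg.leadingCoeff.symm)
  rwa [hfgh, add_sub_cancel_left, ← hfgh, ← smul_eq_C_mul, degree_smul_of_smul_regular _
    (Module.Flat.isSMulRegular_of_nonZeroDivisors hϖ), degree_eq_natDegree hf.ne_zero] at hlt

variable {ϖ : A} (hker : RingHom.ker φ = Ideal.span {ϖ}) (hϖ : ϖ ∈ nonZeroDivisors A)
include hker hϖ

lemma eq_of_C_sq_dvd_squareLift_sub {x y : k[X] × k[X]} (hx : x.1.Monic) (hy : y.1.Monic)
    (h : C (ϖ ^ 2) ∣ squareLift hφ ϖ x - squareLift hφ ϖ y) : x = y := by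
  have hmap (z : k[X] × k[X]) : (squareLift hφ ϖ z).map φ = z.1 ^ 2 := by
    exact (map_eq_map_pow hker rfl).trans (by rw [map_polyLift])
  have hfst : x.1 = y.1 := by
    refine eq_of_monic_of_sq_eq_sq hx hy ?_
    rw [← hmap, ← hmap, map_eq_map_iff_C_dvd_sub hker]
    exact (map_dvd C (dvd_pow_self ϖ two_ne_zero)).trans h
  obtain ⟨w, hw⟩ := h
  have hsnd : polyLift hφ x.2 - polyLift hφ y.2 = C ϖ * w := by
    refine Module.Flat.isSMulRegular_of_nonZeroDivisors (M := A[X]) hϖ ?_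
    simp only [smul_eq_C_mul]
    rw [squareLift, squareLift, hfst, C_pow] at hw
    linear_combination hw
  refine Prod.ext hfst ?_
  rw [← map_polyLift hφ x.2, ← map_polyLift hφ y.2, map_eq_map_iff_C_dvd_sub hker, hsnd]
  exact dvd_mul_right _ _

theorem isIntegrallyClosedIn_and_map_eq_sq_iff (hϖJ : ϖ ∈ (⊥ : Ideal A).jacobson) {f : A[X]}
    (hf : f.Monic) {m : ℕ} (hdeg : f.natDegree = 2 * m) (B : Type*) [CommRing B]
    [Algebra (AdjoinRoot f) B] [IsLocalization.Away (AdjoinRoot.of f ϖ) B] :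
    (IsIntegrallyClosedIn (AdjoinRoot f) B ∧ ∃ G : k[X], G.Monic ∧ f.map φ = G ^ 2) ↔
      ∃ x ∈ coprimePairs k m (2 * m), C (ϖ ^ 2) ∣ f - squareLift hφ ϖ x := by
  constructor
  · rintro ⟨hclosed, G, hG, hfG⟩
    obtain ⟨h, hh⟩ : C ϖ ∣ f - polyLift hφ G ^ 2 := by
      rw [← map_eq_map_iff_C_dvd_sub hker, Polynomial.map_pow, map_polyLift, hfG]
    have hfgh : f = polyLift hφ G ^ 2 + C ϖ * h := sub_eq_iff_eq_add'.1 hh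
    have hGm : G.natDegree = m := by
      have := congrArg natDegree hfG
      rw [hf.natDegree_map, natDegree_pow, hdeg] at this
      omega
    have hcop := (isIntegrallyClosedIn_adjoinRoot_iff B hφ hker hϖJ hϖ hf le_rfl hfgh).1 hclosed
    rw [map_polyLift] at hcop
    have hlt : h.degree < (2 * m : ℕ) := hdeg ▸ degree_lt_of_eq_add_C_mul hϖ hf
      ((monic_polyLift hφ hG).pow 2) (by rw [natDegree_polyLift_sq hφ hG, hdeg, hGm]) hfgh
    refine ⟨(G, h.map φ), ⟨⟨⟨hG, hGm⟩, mem_degreeLT.2 (degree_map_le.trans_lt hlt)⟩, hcop⟩, ?_⟩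
    obtain ⟨w, hw⟩ := (map_eq_map_iff_C_dvd_sub hker).1 (map_polyLift hφ (h.map φ)).symm
    exact ⟨w, by rw [squareLift, C_pow]; linear_combination hfgh + C ϖ * hw⟩
  · rintro ⟨⟨G, h⟩, ⟨⟨⟨hG, -⟩, -⟩, hcop⟩, w, hw⟩
    have hfgh : f = polyLift hφ G ^ 2 + C ϖ * (polyLift hφ h + C ϖ * w) := by
      rw [squareLift, C_pow] at hw
      linear_combination hw
    have hfmap := map_eq_map_pow hker hfgh
    have hmap : (polyLift hφ h + C ϖ * w).map φ = h := by
      rw [(map_eq_map_iff_C_dvd_sub hker).2 (by rw [add_sub_cancel_left]; exact dvd_mul_right _ _),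
        map_polyLift]
    rw [map_polyLift] at hfmap
    refine ⟨?_, G, hG, hfmap⟩
    rwa [isIntegrallyClosedIn_adjoinRoot_iff B hφ hker hϖJ hϖ hf le_rfl hfgh, map_polyLift, hmap]

end SquareLift

section ResidueClasses

section LowerCoeffs

variable {A S : Type*} [CommRing A] [CommRing S]

/-- The coefficients of a polynomial below degree `n`, in descending order; for a monic polynomial
of degree `n` this is the coefficient vector identifying it with a point of `Aⁿ`. -/
def lowerCoeffs (n : ℕ) (Q : A[X]) : Fin n → A :=
  fun i => Q.coeff (n - 1 - i)

lemma lowerCoeffs_injOn (n : ℕ) :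
    Set.InjOn (lowerCoeffs n) {P : A[X] | P.Monic ∧ P.natDegree = n} := by
  rintro P ⟨hP, hPn⟩ Q ⟨hQ, hQn⟩ h
  ext j
  rcases lt_trichotomy j n with hj | rfl | hj
  · have := congrFun h ⟨n - 1 - j, by omega⟩
    rwa [lowerCoeffs, lowerCoeffs, Nat.sub_sub_self (by omega)] at this
  · rw [← hPn, hP.coeff_natDegree, hPn, ← hQn, hQ.coeff_natDegree]
  · rw [coeff_eq_zero_of_natDegree_lt (hPn.trans_lt hj),
      coeff_eq_zero_of_natDegree_lt (hQn.trans_lt hj)]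

lemma comp_lowerCoeffs (ψ : A →+* S) (n : ℕ) (Q : A[X]) :
    ψ ∘ lowerCoeffs n Q = lowerCoeffs n (Q.map ψ) :=
  funext fun _ => (coeff_map ψ _).symm

lemma comp_lowerCoeffs_eq_iff (ψ : A →+* S) {n : ℕ} {P Q : A[X]} (hP : P.Monic)
    (hPn : P.natDegree = n) (hQ : Q.Monic) (hQn : Q.natDegree = n) :
    ψ ∘ lowerCoeffs n P = ψ ∘ lowerCoeffs n Q ↔ P.map ψ = Q.map ψ := by
  nontriviality S
  rw [comp_lowerCoeffs, comp_lowerCoeffs]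
  exact (lowerCoeffs_injOn n).eq_iff ⟨hP.map ψ, (hP.natDegree_map ψ).trans hPn⟩
    ⟨hQ.map ψ, (hQ.natDegree_map ψ).trans hQn⟩

end LowerCoeffs

variable {p}

lemma lowerCoeffs_formPoly_consF0 {n : ℕ} (f0 : ℤ_[p]) (v : Fin n → ℤ_[p]) :
    lowerCoeffs n (formPoly n (consF0 p n f0 v)) = v := by
  ext1 i
  rw [lowerCoeffs, coeff_formPoly _ _ (by omega), show n - (n - 1 - i) = i + 1 by omega]
  exact dif_pos i.2

lemma ker_toZMod_eq_span :
    RingHom.ker (PadicInt.toZMod (p := p)) = Ideal.span {(p : ℤ_[p])} :=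
  PadicInt.ker_toZMod.trans PadicInt.maximalIdeal_eq_span_p

lemma natCast_mem_nonZeroDivisors : (p : ℤ_[p]) ∈ nonZeroDivisors ℤ_[p] :=
  mem_nonZeroDivisors_of_ne_zero PadicInt.prime_p.ne_zero

lemma natCast_mem_jacobson_bot : (p : ℤ_[p]) ∈ (⊥ : Ideal ℤ_[p]).jacobson :=
  IsLocalRing.maximalIdeal_le_jacobson _ <|
    PadicInt.maximalIdeal_eq_span_p (p := p) ▸ Ideal.mem_span_singleton_self _

variable (p) in
/-- The coefficient vector modulo `p²` of the monic lift `G² + p h` of a pair `(G, h)`. -/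
def squareLiftResidue (n : ℕ) (x : (ZMod p)[X] × (ZMod p)[X]) : Fin n → ZMod (p ^ 2) :=
  PadicInt.toZModPow 2 ∘
    lowerCoeffs n (squareLift (ZMod.ringHom_surjective PadicInt.toZMod) (p : ℤ_[p]) x)

lemma toZModPow_comp_eq_squareLiftResidue_iff {m : ℕ} {f : ℤ_[p][X]} (hf : f.Monic)
    (hdeg : f.natDegree = 2 * m) {x : (ZMod p)[X] × (ZMod p)[X]}
    (hx : x ∈ coprimePairs (ZMod p) m (2 * m)) :
    PadicInt.toZModPow 2 ∘ lowerCoeffs (2 * m) f = squareLiftResidue p (2 * m) x ↔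
      C ((p : ℤ_[p]) ^ 2) ∣
        f - squareLift (ZMod.ringHom_surjective PadicInt.toZMod) (p : ℤ_[p]) x := by
  rw [squareLiftResidue, comp_lowerCoeffs_eq_iff _ hf hdeg (monic_squareLift _ _ hx)
    (natDegree_squareLift _ _ hx), map_eq_map_iff_C_dvd_sub (PadicInt.ker_toZModPow 2)]

lemma squareLiftResidue_injOn (m : ℕ) :
    Set.InjOn (squareLiftResidue p (2 * m)) (coprimePairs (ZMod p) m (2 * m)) :=
  fun _ hx _ hy hxy => eq_of_C_sq_dvd_squareLift_sub _ ker_toZMod_eq_span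
    natCast_mem_nonZeroDivisors hx.1.1.1 hy.1.1.1
    ((toZModPow_comp_eq_squareLiftResidue_iff (monic_squareLift _ _ hx)
      (natDegree_squareLift _ _ hx) hy).1 hxy)

theorem setOf_isMaxOrder_and_redForm_eq_sq (m : ℕ) :
    {v : Fin (2 * m) → ℤ_[p] | IsMaxOrder ℤ_[p] ℚ_[p] (2 * m) (consF0 p (2 * m) 1 v) ∧
      ∃ H : MvPolynomial (Fin 2) (ZMod p), redForm p (2 * m) (consF0 p (2 * m) 1 v) = H ^ 2} =
      (PadicInt.toZModPow 2 ∘ ·) ⁻¹'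
        (squareLiftResidue p (2 * m) '' coprimePairs (ZMod p) m (2 * m)) := by
  ext v
  set c := consF0 p (2 * m) 1 v
  have hc : c 0 = 1 := rfl
  have hf := monic_formPoly (n := 2 * m) hc
  have hdeg := natDegree_formPoly (n := 2 * m) hc
  have hloc := isLocalization_away_KF (K := ℚ_[p]) (n := 2 * m) hc
    (natCast_mem_nonZeroDivisors (p := p))
  rw [Set.mem_ofPred_eq, isMaxOrder_iff hc (IsFractionRing.injective ℤ_[p] ℚ_[p]),
    redForm_eq_homogenize, exists_homogenize_eq_sq_iff (hf.map _) (natDegree_map_le.trans hdeg.le),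
    isIntegrallyClosedIn_and_map_eq_sq_iff (ZMod.ringHom_surjective _) ker_toZMod_eq_span
      natCast_mem_nonZeroDivisors natCast_mem_jacobson_bot hf hdeg]
  have hv : lowerCoeffs (2 * m) (formPoly (2 * m) c) = v := lowerCoeffs_formPoly_consF0 1 v
  refine exists_congr fun x => and_congr_right fun hx => ?_
  rw [← toZModPow_comp_eq_squareLiftResidue_iff hf hdeg hx, hv, eq_comm]

end ResidueClasses

/-- Proposition 3.7: the density of monic binary forms of degree `2m`
over `ℤ_p` that cut out the maximal order and whose reduction modulo `p` is a perfect
square equals `p^{-m}(1 - p^{-1})`. -/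
theorem monic_maximal_square_density
    (p : ℕ) [Fact p.Prime] (m : ℕ) (hm : 1 ≤ m) :
    (haarP p (2 * m) {v : Fin (2 * m) → ℤ_[p] |
        IsMaxOrder ℤ_[p] ℚ_[p] (2 * m) (consF0 p (2 * m) 1 v) ∧
        ∃ H : MvPolynomial (Fin 2) (ZMod p),
          redForm p (2 * m) (consF0 p (2 * m) 1 v) = H ^ 2}).toReal =
      ((p : ℝ) ^ m)⁻¹ * (1 - (p : ℝ)⁻¹) := by
  rw [setOf_isMaxOrder_and_redForm_eq_sq, haarP_preimage_toZModPow,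
    (squareLiftResidue_injOn m).ncard_image]
  have hp : (p : ℝ) ≠ 0 := Nat.cast_ne_zero.2 (NeZero.ne p)
  rw [ENNReal.toReal_div, ENNReal.toReal_pow, ENNReal.toReal_natCast, ENNReal.toReal_natCast,
    ncard_coprimePairs (ZMod p) (by omega) (by omega), Nat.card_zmod]
  field_simp
  ring

end BHS
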